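/- arXiv:2401.13585 — 2 statements merged into one kernel-verified Lean document; each statement's English description precedes it below -/
import Mathlib

section
/- Let Γ¹,…,Γᵐ be finitely many admissible sets of invertible n×n real matrices. Consider any sequence (y_κ) in ℝⁿ defined by y_{κ+1} = Λ_κ y_κ, where at each step κ an index j_κ ∈ {1,…,m} is chosen arbitrarily and Λ_κ is chosen as a minimizer of yᵀ_κ M_Λ y_κ over Λ ∈ Γ^{j_κ}. Then y_κ → 0 as κ → ∞. -/
open Matrix Set Filter Topology Pointwise

noncomputable section

/-- The quadratic form `xᵀ M x`. -/
def quadForm {n : ℕ} (M : Matrix (Fin n) (Fin n) ℝ) (x : Fin n → ℝ) : ℝ :=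
  x ⬝ᵥ M.mulVec x

/-- The ellipsoid `{x : xᵀ M x ≤ 1}`. -/
def ellipsoid {n : ℕ} (M : Matrix (Fin n) (Fin n) ℝ) : Set (Fin n → ℝ) :=
  {x | quadForm M x ≤ 1}

/-- `S*_Γ = ⋃_{Λ ∈ Γ} S_Λ` where `S_Λ = {x : xᵀ (ΛᵀM₀Λ) x ≤ 1}`. -/
def SStar {n : ℕ} (M₀ : Matrix (Fin n) (Fin n) ℝ)
    (Γ : Finset (Matrix (Fin n) (Fin n) ℝ)) : Set (Fin n → ℝ) :=
  ⋃ Λ ∈ Γ, ellipsoid (Λᵀ * M₀ * Λ)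

/-!
Let `p x = √(xᵀ M₀ x)` be the gauge of `S₀`. Since `S₀` is compact and there are finitely many
admissible sets, a single `ρ > 1` satisfies `ρ • S₀ ⊆ S*_Γ` for all of them. Rescaling a point to
the boundary of `S₀` turns this inclusion into the existence, at every `x`, of a `Λ ∈ Γ` with
`ρ * p (Λ x) ≤ p x`. A minimizing choice does at least as well, so `p (y κ)` decays geometrically,
and `p` is bounded below by a multiple of the norm. Of the maps `x ↦ p (Λ x)` only the positive
homogeneity matters.
-/

theorem exists_one_lt_forall_smul_mem {X : Type*} [TopologicalSpace X] [MulAction ℝ X]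
    [ContinuousSMul ℝ X] {K U : Set X} (hK : IsCompact K) (hU : IsOpen U) (hKU : K ⊆ U) :
    ∃ ρ : ℝ, 1 < ρ ∧ ∀ x ∈ K, ρ • x ∈ U := by
  have near_one : ∀ᶠ t in 𝓝 (1 : ℝ), ∀ x ∈ K, t • x ∈ U :=
    hK.eventually_forall_of_forall_eventually fun x hx ↦
      continuous_smul.continuousAt.eventually_mem (hU.mem_nhds (by simpa using hKU hx))
  have right_of_one : ∀ᶠ t in 𝓝[>] (1 : ℝ), 1 < t ∧ ∀ x ∈ K, t • x ∈ U :=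
    eventually_mem_nhdsWithin.and (near_one.filter_mono nhdsWithin_le_nhds)
  exact right_of_one.exists

theorem tendsto_zero_of_le_const_mul {u : ℕ → ℝ} {c : ℝ} (hu : ∀ k, 0 ≤ u k) (hc₀ : 0 ≤ c)
    (hc₁ : c < 1) (h : ∀ k, u (k + 1) ≤ c * u k) : Tendsto u atTop (𝓝 0) := by
  have geometric : Tendsto (fun k ↦ c ^ k * u 0) atTop (𝓝 0) := by
    simpa only [zero_mul] using (tendsto_pow_atTop_nhds_zero_of_lt_one hc₀ hc₁).mul_const (u 0)
  exact squeeze_zero hu (fun k ↦ le_geom hc₀ k fun i _ ↦ h i) geometric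

/-- Positive homogeneity of degree one, the scaling behaviour of the gauge of an ellipsoid. The
scalar `t = 0` is included, so that `f 0 = 0`. -/
def PosHomogeneous {E : Type*} [SMul ℝ E] (f : E → ℝ) : Prop :=
  ∀ ⦃t : ℝ⦄, 0 ≤ t → ∀ x, f (t • x) = t * f x

namespace PosHomogeneous

section Module

variable {E : Type*} [AddCommMonoid E] [Module ℝ E] {p : E → ℝ}

theorem map_zero (hp : PosHomogeneous p) : p 0 = 0 := by
  simpa only [zero_smul, zero_mul] using hp le_rfl 0

theorem nonneg (hp : PosHomogeneous p) (hpos : ∀ x, x ≠ 0 → 0 < p x) (x : E) : 0 ≤ p x := by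
  rcases eq_or_ne x 0 with rfl | hx
  · exact hp.map_zero.ge
  · exact (hpos x hx).le

theorem exists_mul_le {α : Type*} {q : α → E → ℝ} {s : Set α} {ρ : ℝ} (hp : PosHomogeneous p)
    (hpos : ∀ x, x ≠ 0 → 0 < p x) (hq : ∀ a, PosHomogeneous (q a)) (hρ : 0 ≤ ρ)
    (h : ∀ x, p x ≤ 1 → ∃ a ∈ s, q a (ρ • x) ≤ 1) (x : E) : ∃ a ∈ s, ρ * q a x ≤ p x := by
  rcases eq_or_ne x 0 with rfl | hx
  · obtain ⟨a, ha, -⟩ := h 0 (hp.map_zero.trans_le zero_le_one)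
    exact ⟨a, ha, by simp only [(hq a).map_zero, hp.map_zero, mul_zero, le_refl]⟩
  · have hpx := hpos x hx
    have hinv : 0 ≤ (p x)⁻¹ := inv_nonneg.2 hpx.le
    have on_boundary : p ((p x)⁻¹ • x) = 1 := by rw [hp hinv, inv_mul_cancel₀ hpx.ne']
    obtain ⟨a, ha, hle⟩ := h _ on_boundary.le
    refine ⟨a, ha, ?_⟩
    rwa [hq a hρ, hq a hinv, mul_left_comm, inv_mul_le_one₀ hpx] at hle

end Module

section Normed

variable {E : Type*} [NormedAddCommGroup E] [NormedSpace ℝ E] {p : E → ℝ}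

theorem exists_mul_norm_le [ProperSpace E] (hp : PosHomogeneous p) (hcont : Continuous p)
    (hpos : ∀ x, x ≠ 0 → 0 < p x) : ∃ c : ℝ, 0 < c ∧ ∀ x, c * ‖x‖ ≤ p x := by
  obtain ⟨c, hc, hsphere⟩ : ∃ c : ℝ, 0 < c ∧ ∀ x ∈ Metric.sphere (0 : E) 1, c ≤ p x :=
    (isCompact_sphere 0 1).exists_forall_le' hcont.continuousOn fun x hx ↦
      hpos x (ne_zero_of_mem_unit_sphere ⟨x, hx⟩)
  refine ⟨c, hc, fun x ↦ ?_⟩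
  rcases eq_or_ne x 0 with rfl | hx
  · simp only [norm_zero, mul_zero, hp.map_zero, le_refl]
  · have normalized : c ≤ p (‖x‖⁻¹ • x) :=
      hsphere _ (mem_sphere_zero_iff_norm.2 (norm_smul_inv_norm (𝕜 := ℝ) hx))
    rwa [hp (by positivity), ← div_eq_inv_mul, le_div_iff₀ (norm_pos_iff.2 hx)] at normalized

theorem isCompact_setOf_le [ProperSpace E] (hp : PosHomogeneous p) (hcont : Continuous p)
    (hpos : ∀ x, x ≠ 0 → 0 < p x) (r : ℝ) : IsCompact {x | p x ≤ r} := by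
  obtain ⟨c, hc, hle⟩ := hp.exists_mul_norm_le hcont hpos
  refine (isCompact_closedBall 0 (r / c)).of_isClosed_subset
    (isClosed_le hcont continuous_const) fun x hx ↦ ?_
  rw [mem_closedBall_zero_iff, le_div_iff₀' hc]
  exact (hle x).trans hx

theorem tendsto_zero_of_comp [ProperSpace E] {β : Type*} {l : Filter β} {y : β → E}
    (hp : PosHomogeneous p) (hcont : Continuous p) (hpos : ∀ x, x ≠ 0 → 0 < p x)
    (hy : Tendsto (fun b ↦ p (y b)) l (𝓝 0)) : Tendsto y l (𝓝 0) := by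
  obtain ⟨c, hc, hle⟩ := hp.exists_mul_norm_le hcont hpos
  refine squeeze_zero_norm (fun b ↦ (le_div_iff₀' hc).2 (hle (y b))) ?_
  simpa only [zero_div] using hy.div_const c

end Normed

end PosHomogeneous

theorem stmt1_general {E ι α : Type*} [NormedAddCommGroup E] [NormedSpace ℝ E] [ProperSpace E]
    [Finite ι] {p : E → ℝ} (hcont : Continuous p) (hp : PosHomogeneous p)
    (hpos : ∀ x, x ≠ 0 → 0 < p x) {q : α → E → ℝ} (hq : ∀ a, PosHomogeneous (q a))
    {Γ : ι → Set α} (hadm : ∀ i, {x | p x ≤ 1} ⊆ interior (⋃ a ∈ Γ i, {x | q a x ≤ 1}))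
    {y : ℕ → E} {j : ℕ → ι} (hstep : ∀ κ, ∀ a ∈ Γ (j κ), p (y (κ + 1)) ≤ q a (y κ)) :
    Tendsto y atTop (𝓝 0) := by
  obtain ⟨ρ, hρ, hdilate⟩ := exists_one_lt_forall_smul_mem (hp.isCompact_setOf_le hcont hpos 1)
    (isOpen_iInter_of_finite fun _ ↦ isOpen_interior) (subset_iInter hadm)
  have hρ₀ : 0 < ρ := one_pos.trans hρ
  have covered : ∀ i x, p x ≤ 1 → ∃ a ∈ Γ i, q a (ρ • x) ≤ 1 := fun i x hx ↦ by
    simpa only [mem_iUnion₂, mem_ofPred_eq, exists_prop] using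
      interior_subset (mem_iInter.1 (hdilate x hx) i)
  have contraction : ∀ κ, p (y (κ + 1)) ≤ ρ⁻¹ * p (y κ) := fun κ ↦ by
    obtain ⟨a, ha, hle⟩ := hp.exists_mul_le hpos hq hρ₀.le (covered (j κ)) (y κ)
    exact (hstep κ a ha).trans ((le_inv_mul_iff₀ hρ₀).2 hle)
  exact hp.tendsto_zero_of_comp hcont hpos <| tendsto_zero_of_le_const_mul
    (fun κ ↦ hp.nonneg hpos (y κ)) (inv_nonneg.2 hρ₀.le) (inv_lt_one_of_one_lt₀ hρ) contraction

section Ellipsoid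

variable {n : ℕ}

theorem quadForm_smul (M : Matrix (Fin n) (Fin n) ℝ) (t : ℝ) (x : Fin n → ℝ) :
    quadForm M (t • x) = t ^ 2 * quadForm M x := by
  simp only [quadForm, mulVec_smul, dotProduct_smul, smul_dotProduct, smul_eq_mul]
  ring

theorem quadForm_transpose_mul_mul (M L : Matrix (Fin n) (Fin n) ℝ) (x : Fin n → ℝ) :
    quadForm (Lᵀ * M * L) x = quadForm M (L *ᵥ x) := by
  simp only [quadForm, ← mulVec_mulVec]
  rw [dotProduct_mulVec, vecMul_transpose]

theorem quadForm_pos {M : Matrix (Fin n) (Fin n) ℝ} (hM : M.PosDef) {x : Fin n → ℝ}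
    (hx : x ≠ 0) : 0 < quadForm M x := by
  simpa only [quadForm, star_trivial] using hM.dotProduct_mulVec_pos hx

/-- The gauge `x ↦ √(xᵀ M x)` of `ellipsoid M`, the degree-one form of `quadForm M` to which
`PosHomogeneous` applies. Where `quadForm M x < 0` it takes the junk value `0`, which leaves
the sublevel set at level one unchanged. -/
def ellipsoidGauge (M : Matrix (Fin n) (Fin n) ℝ) (x : Fin n → ℝ) : ℝ :=
  √(quadForm M x)

theorem continuous_ellipsoidGauge (M : Matrix (Fin n) (Fin n) ℝ) :
    Continuous (ellipsoidGauge M) :=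
  (continuous_id.dotProduct (continuous_const.matrix_mulVec continuous_id)).sqrt

theorem posHomogeneous_ellipsoidGauge (M : Matrix (Fin n) (Fin n) ℝ) :
    PosHomogeneous (ellipsoidGauge M) := fun t ht x ↦ by
  rw [ellipsoidGauge, quadForm_smul, Real.sqrt_mul (sq_nonneg t), Real.sqrt_sq ht, ellipsoidGauge]

theorem ellipsoidGauge_pos {M : Matrix (Fin n) (Fin n) ℝ} (hM : M.PosDef) (x : Fin n → ℝ)
    (hx : x ≠ 0) : 0 < ellipsoidGauge M x :=
  Real.sqrt_pos.2 (quadForm_pos hM hx)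

theorem setOf_ellipsoidGauge_le_one (M : Matrix (Fin n) (Fin n) ℝ) :
    {x | ellipsoidGauge M x ≤ 1} = ellipsoid M :=
  Set.ext fun _ ↦ Real.sqrt_le_one

end Ellipsoid

/-- with admissible sets Γ¹,…,Γᵐ, any sequence generated by
choosing at each step an arbitrary admissible set and a minimizing matrix from it
converges to zero. -/
theorem stmt1 {n : ℕ} (hn : 0 < n)
    (M₀ : Matrix (Fin n) (Fin n) ℝ) (hM₀ : M₀.PosDef)
    (m : ℕ) (hm : 0 < m)
    (Γ : Fin m → Finset (Matrix (Fin n) (Fin n) ℝ))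
    (hne : ∀ i, (Γ i).Nonempty)
    (hinv : ∀ i, ∀ Λ ∈ Γ i, IsUnit Λ.det)
    (hadm : ∀ i, ellipsoid M₀ ⊆ interior (SStar M₀ (Γ i)))
    (y : ℕ → Fin n → ℝ) (j : ℕ → Fin m) (A : ℕ → Matrix (Fin n) (Fin n) ℝ)
    (hA : ∀ κ, A κ ∈ Γ (j κ))
    (hmin : ∀ κ, ∀ Λ ∈ Γ (j κ),
      quadForm ((A κ)ᵀ * M₀ * A κ) (y κ) ≤ quadForm (Λᵀ * M₀ * Λ) (y κ))
    (hstep : ∀ κ, y (κ + 1) = (A κ).mulVec (y κ)) :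
    Tendsto y atTop (nhds 0) := by
  exact stmt1_general (q := fun Λ ↦ ellipsoidGauge (Λᵀ * M₀ * Λ)) (Γ := fun i ↦ ↑(Γ i))
    (continuous_ellipsoidGauge M₀) (posHomogeneous_ellipsoidGauge M₀) (ellipsoidGauge_pos hM₀)
    (fun _ ↦ posHomogeneous_ellipsoidGauge _)
    (by simpa only [setOf_ellipsoidGauge_le_one, SStar, SetLike.mem_coe] using hadm)
    (fun κ Λ hΛ ↦ Real.sqrt_le_sqrt (by
      simpa only [hstep, quadForm_transpose_mul_mul] using hmin κ Λ hΛ))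
end
end

section
/- Let {M_γ}_{γ∈Γ'} be a finite nonempty family of symmetric n×n real matrices, let M₀ be symmetric positive definite, and set G(λ) := M₀ + Σ_{γ∈Γ'} λ_γ M_γ for λ ∈ ℝ^{Γ'}. Suppose λ* is a local maximum of λ ↦ −Σ_{γ∈Γ'} λ_γ on the set {λ : det G(λ) = 0}, and the gradient of λ ↦ det G(λ) at λ* — whose γ-component equals tr(G(λ*)† M_γ) by Jacobi's formula, where G† denotes the adjugate matrix — is nonzero. Then tr(G(λ*)†(M_γ − M_ν)) = 0 for all γ, ν ∈ Γ'. -/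
open Matrix Set Filter Topology Pointwise

noncomputable section

/-- `G(λ) = M₀ + Σ_γ λ_γ M_γ`. -/
def Gmat {n : ℕ} {ι : Type} [Fintype ι] (M₀ : Matrix (Fin n) (Fin n) ℝ)
    (M : ι → Matrix (Fin n) (Fin n) ℝ) (lam : ι → ℝ) : Matrix (Fin n) (Fin n) ℝ :=
  M₀ + ∑ γ, lam γ • M γ

/-!
At a local extremum of `φ` on a level set of `f`, a Lagrange relation `a f' + b φ' = 0` with
`(a, b) ≠ 0` holds. If `φ' ≠ 0` then `a ≠ 0`, so `f'` vanishes on the kernel of `φ'`. For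
`φ(λ) = Σ λ_γ` this kernel contains `e_γ - e_ν`, and for `f = det ∘ G` Jacobi's formula gives
`f' (e_γ - e_ν) = tr(G† (M_γ - M_ν))`.

Jacobi's formula is the derivative of a multilinear map of the rows: expanding along row `i` the
determinant of `A` with that row replaced by row `i` of `B`, and summing over `i`, gives `tr(A† B)`.
-/

section Jacobi

variable {m : Type*} [Fintype m] [DecidableEq m]

theorem det_updateRow_eq_sum_mul_adjugate {R : Type*} [CommRing R] (A : Matrix m m R) (i : m)
    (b : m → R) : (A.updateRow i b).det = ∑ j, b j * A.adjugate j i := by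
  rw [det_eq_sum_mul_adjugate_row _ i]
  simp only [updateRow_self, adjugate_apply, updateRow_idem]

theorem sum_det_updateRow_eq_trace_adjugate_mul {R : Type*} [CommRing R] (A B : Matrix m m R) :
    ∑ i, (A.updateRow i (B i)).det = (A.adjugate * B).trace := by
  rw [trace_mul_comm]
  simp only [det_updateRow_eq_sum_mul_adjugate, trace, diag_apply, mul_apply]

/-- The linear functional `B ↦ tr(A† B)` on matrices, which by Jacobi's formula is the derivative
of the determinant at `A`. -/
def detDeriv {R : Type*} [CommRing R] [TopologicalSpace R] [IsTopologicalSemiring R]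
    (A : Matrix m m R) : Matrix m m R →L[R] R where
  toLinearMap := traceLinearMap m R R ∘ₗ LinearMap.mulLeft R A.adjugate
  cont := (continuous_const.matrix_mul continuous_id).matrix_trace

open scoped Matrix.Norms.Elementwise

theorem hasStrictFDerivAt_matrix_det {𝕜 : Type*} [NontriviallyNormedField 𝕜] (A : Matrix m m 𝕜) :
    HasStrictFDerivAt det (detDeriv A) A := by
  let detRows : ContinuousMultilinearMap 𝕜 (fun _ : m => m → 𝕜) 𝕜 :=
    { toMultilinearMap := detRowAlternating.toMultilinearMap
      cont := continuous_id.matrix_det }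
  refine (detRows.hasStrictFDerivAt A).congr_fderiv (ContinuousLinearMap.ext fun B => ?_)
  calc detRows.linearDeriv A B
      = ∑ i, (A.updateRow i (B i)).det := detRows.linearDeriv_apply A B
    _ = detDeriv A B := sum_det_updateRow_eq_trace_adjugate_mul A B

end Jacobi

section Lagrange

variable {E : Type*} [NormedAddCommGroup E] [NormedSpace ℝ E] [CompleteSpace E]

theorem fderiv_apply_eq_zero_of_isLocalExtrOn {f φ : E → ℝ} {f' φ' : E →L[ℝ] ℝ} {x v : E}
    (hextr : IsLocalExtrOn φ {y | f y = f x} x) (hf : HasStrictFDerivAt f f' x)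
    (hφ : HasStrictFDerivAt φ φ' x) (hφ' : φ' ≠ 0) (hv : φ' v = 0) : f' v = 0 := by
  obtain ⟨a, b, hab, h⟩ := hextr.exists_multipliers_of_hasStrictFDerivAt_1d hf hφ
  have ha : a ≠ 0 := by
    rintro rfl
    have hb : b ≠ 0 := by simpa using hab
    exact hφ' (by simpa [hb] using h)
  simpa [hv, ha] using DFunLike.congr_fun h v

open scoped Matrix.Norms.Elementwise

theorem trace_adjugate_mul_eq_zero_of_isLocalExtrOn {m : Type*} [Fintype m] [DecidableEq m]
    {G : E → Matrix m m ℝ} {G' : E →L[ℝ] Matrix m m ℝ} {φ : E → ℝ} {φ' : E →L[ℝ] ℝ} {x v : E}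
    (hextr : IsLocalExtrOn φ {y | (G y).det = (G x).det} x) (hG : HasStrictFDerivAt G G' x)
    (hφ : HasStrictFDerivAt φ φ' x) (hφ' : φ' ≠ 0) (hv : φ' v = 0) :
    ((G x).adjugate * G' v).trace = 0 :=
  fderiv_apply_eq_zero_of_isLocalExtrOn hextr ((hasStrictFDerivAt_matrix_det (G x)).comp x hG)
    hφ hφ' hv

theorem stmt3_general {m ι : Type*} [Fintype m] [DecidableEq m] [Fintype ι]
    (M₀ : Matrix m m ℝ) (M : ι → Matrix m m ℝ) (lam : ι → ℝ)
    (hextr : IsLocalExtrOn (fun l : ι → ℝ => ∑ γ, l γ)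
      {l | (M₀ + ∑ γ, l γ • M γ).det = (M₀ + ∑ γ, lam γ • M γ).det} lam) (γ ν : ι) :
    ((M₀ + ∑ γ, lam γ • M γ).adjugate * (M γ - M ν)).trace = 0 := by
  classical
  let L : (ι → ℝ) →L[ℝ] Matrix m m ℝ := (Fintype.linearCombination ℝ M).toContinuousLinearMap
  let σ : (ι → ℝ) →L[ℝ] ℝ := ∑ γ, ContinuousLinearMap.proj γ
  have hG : HasStrictFDerivAt (fun l : ι → ℝ => M₀ + ∑ γ, l γ • M γ) L lam :=
    L.hasStrictFDerivAt.const_add M₀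
  have hsum : HasStrictFDerivAt (fun l : ι → ℝ => ∑ γ, l γ) σ lam :=
    HasStrictFDerivAt.fun_sum fun γ _ => hasStrictFDerivAt_apply γ lam
  have hσ (μ : ι) : σ (Pi.single μ 1) = 1 := by simp [σ]
  have hL (μ : ι) : L (Pi.single μ 1) = M μ := by simp [L]
  have hσ_ne : σ ≠ 0 := fun h => by simpa [h] using hσ γ
  have hσ_sub : σ (Pi.single γ 1 - Pi.single ν 1) = 0 := by rw [map_sub, hσ, hσ, sub_self]
  simpa only [map_sub, hL] using
    trace_adjugate_mul_eq_zero_of_isLocalExtrOn hextr hG hsum hσ_ne hσ_sub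

end Lagrange

/-- if `λ*` is a local maximum of `λ ↦ −Σ λ_γ` on `{λ : det G(λ) = 0}`
and the gradient `(tr(G(λ*)† M_γ))_γ` of `det G` at `λ*` is nonzero, then the trace
equations `tr(G(λ*)†(M_γ − M_ν)) = 0` hold for all `γ, ν`. -/
theorem stmt3 {n : ℕ} {ι : Type} [Fintype ι] [Nonempty ι]
    (M₀ : Matrix (Fin n) (Fin n) ℝ) (hM₀ : M₀.PosDef)
    (M : ι → Matrix (Fin n) (Fin n) ℝ) (hM : ∀ γ, (M γ).IsSymm)
    (lam : ι → ℝ)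
    (hmax : IsLocalMaxOn (fun l : ι → ℝ => -∑ γ, l γ)
      {l : ι → ℝ | (Gmat M₀ M l).det = 0} lam)
    (hconstr : (Gmat M₀ M lam).det = 0)
    (hgrad : (fun γ : ι => ((Gmat M₀ M lam).adjugate * M γ).trace) ≠ 0) :
    ∀ γ ν : ι, ((Gmat M₀ M lam).adjugate * (M γ - M ν)).trace = 0 := by
  rw [← hconstr] at hmax
  have hmin : IsLocalMinOn (fun l : ι → ℝ => ∑ γ, l γ)
      {l | (Gmat M₀ M l).det = (Gmat M₀ M lam).det} lam := by
    simpa only [neg_neg] using hmax.neg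
  exact stmt3_general M₀ M lam (.inl hmin)
end
end
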